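/- For any ε∈[0,1] and states ρ,σ, the hypothesis testing relative entropy satisfies D_H^ε(ρ‖σ) ≤ (D(ρ‖σ) + h(ε))/(1−ε) for ε<1, i.e. the ε-hypothesis testing relative entropy is upper bounded in terms of the Umegaki relative entropy, where h is the binary entropy; equivalently, the weak converse bound min over tests M with Tr Mρ ≥ 1−ε of −log Tr Mσ is at most (D(ρ‖σ)+1)/(1−ε). -/

import Mathlib

open scoped BigOperators ComplexOrder
noncomputable section

variable {ι : Type*} [Fintype ι] [DecidableEq ι]

def IsDensity (ρ : Matrix ι ι ℂ) : Prop := ρ.PosSemidef ∧ ρ.trace = 1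

/-- Matrix logarithm via the functional calculus (junk value `0` off Hermitians). -/
def mlog (A : Matrix ι ι ℂ) : Matrix ι ι ℂ :=
  if h : A.IsHermitian then h.cfc Real.log else 0

def SuppLE (ρ σ : Matrix ι ι ℂ) : Prop := ∀ v, σ.mulVec v = 0 → ρ.mulVec v = 0

/-- Umegaki relative entropy, `+∞` if the support condition fails. -/
def relEnt (ρ σ : Matrix ι ι ℂ) : EReal :=
  @ite _ (SuppLE ρ σ) (Classical.propDecidable _)
    (((ρ * (mlog ρ - mlog σ)).trace.re : ℝ) : EReal) ⊤

/-- Hypothesis testing relative entropy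
`D_H^ε(ρ‖σ) = -log min{Tr Mσ : 0 ≤ M ≤ 1, Tr Mρ ≥ 1-ε}`. -/
def DH (ε : ℝ) (ρ σ : Matrix ι ι ℂ) : ℝ :=
  - Real.log (sInf {t : ℝ | ∃ M : Matrix ι ι ℂ, M.PosSemidef ∧ (1 - M).PosSemidef ∧
      1 - ε ≤ (ρ * M).trace.re ∧ t = (σ * M).trace.re})

/-- The binary entropy function `h(ε)`. -/
def binEnt (ε : ℝ) : ℝ := -(ε * Real.log ε) - (1 - ε) * Real.log (1 - ε)

/-!
Write `ρ = ∑ r i |u i⟩⟨u i|` and `σ = ∑ s j |v j⟩⟨v j|`. The relative entropy of `ρ` and `σ` is the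
classical one of the Nussbaum–Szkoła vectors `P (i, j) = r i |⟨u i, v j⟩|²` and
`Q (i, j) = s j |⟨u i, v j⟩|²`. The classical relative entropy is obtained from the divergences
`∑ P² / (Q + l P)` by integrating over `l > 0`, and each of these dominates
`2 Tr ρX - Tr σX² - l Tr ρX²` for every Hermitian `X`. For a measurement `M` the choice
`X = ∑ x k M k`, for which `X² ≤ ∑ (x k)² M k`, bounds them below by the same divergences of the
outcome distributions; hence measuring does not increase the relative entropy.

For a test `M` with `Tr Mρ = 1 - ε` and `q = Tr Mσ`, the measurement `{M, 1 - M}` gives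
`-h(ε) - (1 - ε) log q - ε log (Tr σ - q) ≤ D(ρ‖σ)`, where the last term on the left is nonnegative.
-/

open Filter Matrix Topology

section Classical

variable {κ κ' : Type*} [Fintype κ] [Fintype κ']

/-- The relative entropy of finite nonnegative vectors. It has its usual meaning only if `q k = 0`
implies `p k = 0`, in which case the junk value `log 0 = 0` is always multiplied by `0`. -/
def classicalRelEnt (p q : κ → ℝ) : ℝ := ∑ k, p k * (Real.log (p k) - Real.log (q k))

/-- The `χ²`-type divergence of `p` from `q + l * p`. It is the derivative at `l` of
`l ↦ ∑ k, p k * log (q k + l * p k)`, which links it to `classicalRelEnt` by integration. -/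
def quadDiv (l : ℝ) (p q : κ → ℝ) : ℝ := ∑ k, p k ^ 2 / (q k + l * p k)

lemma hasDerivAt_mul_log_add_mul {p q l : ℝ} (h : p ≠ 0 → q + l * p ≠ 0) :
    HasDerivAt (fun l => p * Real.log (q + l * p)) (p ^ 2 / (q + l * p)) l := by
  rcases eq_or_ne p 0 with rfl | hp
  · simpa using hasDerivAt_const l (0 : ℝ)
  · have hlin : HasDerivAt (fun l : ℝ => q + l * p) p l := by
      simpa using ((hasDerivAt_id l).mul_const p).const_add q
    simpa only [sq, mul_div_assoc] using (hlin.log (h hp)).const_mul p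

lemma tendsto_mul_log_add_mul_sub (p q : ℝ) :
    Tendsto (fun l : ℝ => p * Real.log (q + l * p) - p * Real.log l) atTop
      (𝓝 (p * Real.log p)) := by
  rcases eq_or_ne p 0 with rfl | hp
  · simp
  have hlim : Tendsto (fun l : ℝ => q * l⁻¹ + p) atTop (𝓝 p) := by
    simpa using (tendsto_inv_atTop_zero.const_mul q).add_const p
  refine ((hlim.log hp).const_mul p).congr' ?_
  filter_upwards [eventually_gt_atTop 0, hlim.eventually_ne hp] with l hl hne
  have hfactor : q + l * p = (q * l⁻¹ + p) * l := by field_simp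
  rw [hfactor, Real.log_mul hne hl.ne']
  ring

lemma hasDerivAt_sum_mul_log_add_mul {p q : κ → ℝ} (hp : ∀ k, 0 ≤ p k) (hq : ∀ k, 0 ≤ q k)
    (hpq : ∀ k, q k = 0 → p k = 0) {l : ℝ} (hl : 0 ≤ l) :
    HasDerivAt (fun l => ∑ k, p k * Real.log (q k + l * p k)) (quadDiv l p q) l := by
  refine HasDerivAt.fun_sum fun k _ => hasDerivAt_mul_log_add_mul fun hk => ?_
  have hqk : 0 < q k := (hq k).lt_of_ne' (mt (hpq k) hk)
  have := mul_nonneg hl (hp k)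
  positivity

lemma tendsto_sum_mul_log_add_mul_sub (p q : κ → ℝ) :
    Tendsto (fun l : ℝ => ∑ k, p k * Real.log (q k + l * p k) - (∑ k, p k) * Real.log l) atTop
      (𝓝 (∑ k, p k * Real.log (p k))) := by
  simp only [Finset.sum_mul, ← Finset.sum_sub_distrib]
  exact tendsto_finsetSum _ fun k _ => tendsto_mul_log_add_mul_sub (p k) (q k)

theorem classicalRelEnt_le_of_quadDiv_le {p q : κ → ℝ} {P Q : κ' → ℝ}
    (hp : ∀ k, 0 ≤ p k) (hq : ∀ k, 0 ≤ q k) (hpq : ∀ k, q k = 0 → p k = 0)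
    (hP : ∀ k, 0 ≤ P k) (hQ : ∀ k, 0 ≤ Q k) (hPQ : ∀ k, Q k = 0 → P k = 0)
    (hsum : ∑ k, p k = ∑ k, P k) (hdiv : ∀ l : ℝ, 0 < l → quadDiv l p q ≤ quadDiv l P Q) :
    classicalRelEnt p q ≤ classicalRelEnt P Q := by
  set F : ℝ → ℝ := fun l =>
    ∑ k, P k * Real.log (Q k + l * P k) - ∑ k, p k * Real.log (q k + l * p k) with hF
  have hderiv : ∀ l, 0 ≤ l → HasDerivAt F (quadDiv l P Q - quadDiv l p q) l := fun l hl =>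
    (hasDerivAt_sum_mul_log_add_mul hP hQ hPQ hl).sub (hasDerivAt_sum_mul_log_add_mul hp hq hpq hl)
  have hmono : MonotoneOn F (Set.Ici 0) := by
    refine monotoneOn_of_hasDerivWithinAt_nonneg (convex_Ici 0)
      (fun l hl => (hderiv l hl).continuousAt.continuousWithinAt)
      (fun l hl => (hderiv l (interior_subset hl)).hasDerivWithinAt) fun l hl => ?_
    rw [interior_Ici] at hl
    exact sub_nonneg.2 (hdiv l hl)
  have hlim : Tendsto F atTop
      (𝓝 (∑ k, P k * Real.log (P k) - ∑ k, p k * Real.log (p k))) := by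
    refine ((tendsto_sum_mul_log_add_mul_sub P Q).sub
      (tendsto_sum_mul_log_add_mul_sub p q)).congr fun l => ?_
    rw [hsum, sub_sub_sub_cancel_right]
  have hle : F 0 ≤ ∑ k, P k * Real.log (P k) - ∑ k, p k * Real.log (p k) :=
    ge_of_tendsto hlim <| (eventually_ge_atTop 0).mono fun l hl => hmono Set.self_mem_Ici hl hl
  simp only [hF, zero_mul, add_zero] at hle
  simp only [classicalRelEnt, mul_sub, Finset.sum_sub_distrib]
  linarith

lemma sq_div_eq_two_mul_mul_sub_mul_sq {K : Type*} [Field K] (x d : K) :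
    x ^ 2 / d = 2 * x * (x / d) - d * (x / d) ^ 2 := by
  rcases eq_or_ne d 0 with rfl | hd
  · simp
  · field_simp [hd]
    ring

lemma two_mul_mul_sub_mul_sq_le_sq_div {K : Type*} [Field K] [LinearOrder K]
    [IsStrictOrderedRing K] {x d : K} (hd : 0 ≤ d) (hx : d = 0 → x = 0) (a : K) :
    2 * x * a - d * a ^ 2 ≤ x ^ 2 / d := by
  rcases hd.eq_or_lt' with rfl | hd
  · simp [hx rfl]
  · rw [le_div_iff₀ hd]
    linarith [sq_nonneg (x - d * a)]

end Classical

section PosSemidef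

variable {𝕜 n κ : Type*} [RCLike 𝕜] [Fintype n] [Fintype κ]

open scoped MatrixOrder Matrix.Norms.L2Operator in
lemma posSemidef_exists_eq_conjTranspose_mul_self {A : Matrix n n 𝕜} (hA : A.PosSemidef) :
    ∃ C : Matrix n n 𝕜, A = Cᴴ * C := by
  classical
  exact CStarAlgebra.nonneg_iff_eq_star_mul_self.1 hA.nonneg

lemma re_trace_mul_nonneg {A B : Matrix n n 𝕜} (hA : A.PosSemidef) (hB : B.PosSemidef) :
    0 ≤ RCLike.re (A * B).trace := by
  obtain ⟨C, rfl⟩ := posSemidef_exists_eq_conjTranspose_mul_self hA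
  rw [Matrix.mul_assoc, trace_mul_comm]
  exact (RCLike.nonneg_iff.1 (hB.mul_mul_conjTranspose_same C).trace_nonneg).1

lemma mul_eq_zero_of_re_trace_mul_eq_zero {A B : Matrix n n 𝕜} (hA : A.PosSemidef)
    (hB : B.PosSemidef) (h : RCLike.re (A * B).trace = 0) : A * B = 0 := by
  obtain ⟨C, rfl⟩ := posSemidef_exists_eq_conjTranspose_mul_self hA
  obtain ⟨D, rfl⟩ := posSemidef_exists_eq_conjTranspose_mul_self hB
  have htrace : (Cᴴ * C * (Dᴴ * D)).trace = ((C * Dᴴ) * (C * Dᴴ)ᴴ).trace := by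
    rw [Matrix.mul_assoc, trace_mul_comm]
    simp only [conjTranspose_mul, conjTranspose_conjTranspose, Matrix.mul_assoc]
  have him := (RCLike.nonneg_iff.1 (posSemidef_self_mul_conjTranspose (C * Dᴴ)).trace_nonneg).2
  rw [htrace] at h
  have hCD : C * Dᴴ = 0 :=
    trace_mul_conjTranspose_self_eq_zero_iff.1 (RCLike.ext (by simpa using h) (by simpa using him))
  rw [Matrix.mul_assoc, ← Matrix.mul_assoc C, hCD, Matrix.zero_mul, Matrix.mul_zero]

lemma re_trace_mul_smul (A B : Matrix n n 𝕜) (c : ℝ) :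
    RCLike.re (A * c • B).trace = c * RCLike.re (A * B).trace := by
  rw [Matrix.mul_smul, trace_smul, RCLike.smul_re]

lemma re_trace_mul_sum_smul (A : Matrix n n 𝕜) (M : κ → Matrix n n 𝕜) (x : κ → ℝ) :
    RCLike.re (A * ∑ k, x k • M k).trace = ∑ k, x k * RCLike.re (A * M k).trace := by
  simp only [Matrix.mul_sum, trace_sum, map_sum, re_trace_mul_smul]

lemma isHermitian_sum_smul {m : Type*} {M : κ → Matrix m m 𝕜} (hM : ∀ k, (M k).IsHermitian)
    (x : κ → ℝ) : (∑ k, x k • M k).IsHermitian := by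
  simp [IsHermitian, conjTranspose_sum, conjTranspose_smul, (hM _).eq]

/-- Kadison's inequality for the unital positive map `x ↦ ∑ k, x k • M k`: the difference is
`∑ k, (x k - X) * M k * (x k - X)` with `X = ∑ k, x k • M k`. -/
lemma posSemidef_sum_sq_smul_sub_sq [DecidableEq n] {M : κ → Matrix n n 𝕜}
    (hM : ∀ k, (M k).PosSemidef) (hsum : ∑ k, M k = 1) (x : κ → ℝ) :
    (∑ k, x k ^ 2 • M k - (∑ k, x k • M k) * ∑ k, x k • M k).PosSemidef := by
  set X := ∑ k, x k • M k with hX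
  have hXh : X.IsHermitian := isHermitian_sum_smul (fun k => (hM k).1) x
  have hexpand : ∀ k, (x k • 1 - X) * M k * (x k • 1 - X)ᴴ =
      x k ^ 2 • M k - x k • M k * X - (X * (x k • M k) - X * M k * X) := by
    intro k
    simp only [conjTranspose_sub, conjTranspose_smul, conjTranspose_one, hXh.eq, star_trivial]
    simp only [sub_mul, mul_sub, smul_mul_assoc, mul_smul_comm, one_mul, mul_one, smul_sub,
      smul_smul, sq]
    abel
  have hpsd := posSemidef_sum Finset.univ fun k _ =>
    (hM k).mul_mul_conjTranspose_same (x k • 1 - X)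
  simp only [hexpand, Finset.sum_sub_distrib, ← Finset.sum_mul, ← Finset.mul_sum, hsum, ← hX,
    mul_one, sub_self, sub_zero] at hpsd
  exact hpsd

lemma re_trace_mul_sq_le [DecidableEq n] {A : Matrix n n 𝕜} (hA : A.PosSemidef)
    {M : κ → Matrix n n 𝕜} (hM : ∀ k, (M k).PosSemidef) (hsum : ∑ k, M k = 1) (x : κ → ℝ) :
    RCLike.re (A * ((∑ k, x k • M k) * ∑ k, x k • M k)).trace ≤
      ∑ k, x k ^ 2 * RCLike.re (A * M k).trace := by
  have h := re_trace_mul_nonneg hA (posSemidef_sum_sq_smul_sub_sq hM hsum x)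
  rw [Matrix.mul_sub, trace_sub, map_sub, re_trace_mul_sum_smul] at h
  exact sub_nonneg.1 h

end PosSemidef

section Spectral

variable {𝕜 n : Type*} [RCLike 𝕜] [Fintype n] [DecidableEq n]

/-- The Hermitian matrix whose spectral decomposition has the columns of `U` as eigenvectors and
`r` as eigenvalues. -/
def unitaryDiag (U : unitaryGroup n 𝕜) (r : n → ℝ) : Matrix n n 𝕜 :=
  (U : Matrix n n 𝕜) * diagonal (fun i => (r i : 𝕜)) * star (U : Matrix n n 𝕜)

/-- The matrix of `X` between the orthonormal bases formed by the columns `u i` of `U` and `v j`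
of `V`, with entries `⟨u i, X (v j)⟩`. -/
def matrixBetween (U V : unitaryGroup n 𝕜) (X : Matrix n n 𝕜) : Matrix n n 𝕜 :=
  star (U : Matrix n n 𝕜) * X * V

/-- The first Nussbaum–Szkoła vector `r i * |⟨u i, v j⟩|²` of the pair
`unitaryDiag U r`, `unitaryDiag V s`, where `u i`, `v j` are the columns of `U`, `V`. -/
def nussbaumSzkolaFst (U V : unitaryGroup n 𝕜) (r : n → ℝ) (ij : n × n) : ℝ :=
  r ij.1 * ‖matrixBetween U V 1 ij.1 ij.2‖ ^ 2

/-- The second Nussbaum–Szkoła vector `s j * |⟨u i, v j⟩|²` of the pair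
`unitaryDiag U r`, `unitaryDiag V s`, where `u i`, `v j` are the columns of `U`, `V`. -/
def nussbaumSzkolaSnd (U V : unitaryGroup n 𝕜) (s : n → ℝ) (ij : n × n) : ℝ :=
  s ij.2 * ‖matrixBetween U V 1 ij.1 ij.2‖ ^ 2

lemma unitaryDiag_mul (U : unitaryGroup n 𝕜) (r : n → ℝ) :
    unitaryDiag U r * U = U * diagonal (fun i => (r i : 𝕜)) := by
  rw [unitaryDiag, Matrix.mul_assoc, Unitary.coe_star_mul_self, Matrix.mul_one]

lemma unitaryDiag_mulVec_col (U : unitaryGroup n 𝕜) (r : n → ℝ) (j : n) :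
    unitaryDiag U r *ᵥ (U : Matrix n n 𝕜).col j = (r j : 𝕜) • (U : Matrix n n 𝕜).col j := by
  ext i
  have hentry := congrFun (congrFun (unitaryDiag_mul U r) i) j
  rw [mul_diagonal, mul_comm] at hentry
  exact hentry

lemma matrixBetween_sub (U V : unitaryGroup n 𝕜) (X Y : Matrix n n 𝕜) :
    matrixBetween U V (X - Y) = matrixBetween U V X - matrixBetween U V Y := by
  simp only [matrixBetween, Matrix.mul_sub, Matrix.sub_mul]

lemma conjTranspose_matrixBetween (U V : unitaryGroup n 𝕜) (X : Matrix n n 𝕜) :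
    (matrixBetween U V X)ᴴ = matrixBetween V U Xᴴ := by
  simp only [matrixBetween, star_eq_conjTranspose, conjTranspose_mul, conjTranspose_conjTranspose,
    Matrix.mul_assoc]

lemma matrixBetween_mul_conjTranspose (U V : unitaryGroup n 𝕜) (X Y : Matrix n n 𝕜) :
    matrixBetween U V X * (matrixBetween U V Y)ᴴ = matrixBetween U U (X * Yᴴ) := by
  rw [conjTranspose_matrixBetween]
  simp only [matrixBetween, Matrix.mul_assoc]
  rw [← Matrix.mul_assoc (V : Matrix n n 𝕜), Unitary.mul_star_self_of_mem V.2,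
    Matrix.one_mul]

lemma matrixBetween_unitaryDiag_right_apply (U V : unitaryGroup n 𝕜) (s : n → ℝ) (i j : n) :
    matrixBetween U V (unitaryDiag V s) i j = s j * matrixBetween U V 1 i j := by
  rw [matrixBetween, Matrix.mul_assoc, unitaryDiag_mul, ← Matrix.mul_assoc, mul_diagonal,
    matrixBetween, Matrix.mul_one, mul_comm]

lemma matrixBetween_unitaryDiag_left_apply (U V : unitaryGroup n 𝕜) (r : n → ℝ) (i j : n) :
    matrixBetween U V (unitaryDiag U r) i j = r i * matrixBetween U V 1 i j := by
  rw [matrixBetween, unitaryDiag, ← Matrix.mul_assoc, ← Matrix.mul_assoc,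
    Unitary.coe_star_mul_self, Matrix.one_mul, Matrix.mul_assoc, diagonal_mul,
    matrixBetween, Matrix.mul_one]

lemma trace_unitaryDiag_mul (U : unitaryGroup n 𝕜) (r : n → ℝ) (X : Matrix n n 𝕜) :
    (unitaryDiag U r * X).trace = ∑ i, (r i : 𝕜) * matrixBetween U U X i i := by
  rw [unitaryDiag, Matrix.mul_assoc, Matrix.mul_assoc, trace_mul_comm, Matrix.mul_assoc]
  simp only [trace, diag_apply, diagonal_mul, matrixBetween]

lemma trace_unitaryDiag_mul_mul_conjTranspose (U V : unitaryGroup n 𝕜) (r : n → ℝ)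
    (X Y : Matrix n n 𝕜) :
    (unitaryDiag U r * (X * Yᴴ)).trace =
      ∑ i, ∑ j, (r i : 𝕜) * (matrixBetween U V X i j * star (matrixBetween U V Y i j)) := by
  simp only [trace_unitaryDiag_mul, ← matrixBetween_mul_conjTranspose U V, mul_apply,
    conjTranspose_apply, Finset.mul_sum]

lemma posSemidef_unitaryDiag (U : unitaryGroup n 𝕜) {r : n → ℝ} (hr : ∀ i, 0 ≤ r i) :
    (unitaryDiag U r).PosSemidef :=
  (PosSemidef.diagonal fun i => RCLike.ofReal_nonneg.2 (hr i)).mul_mul_conjTranspose_same _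

lemma re_trace_unitaryDiag_mul (U V : unitaryGroup n 𝕜) (r : n → ℝ) (X : Matrix n n 𝕜) :
    RCLike.re (unitaryDiag U r * X).trace = ∑ i, ∑ j,
      r i * RCLike.re (matrixBetween U V X i j * star (matrixBetween U V 1 i j)) := by
  have := trace_unitaryDiag_mul_mul_conjTranspose U V r X 1
  rw [conjTranspose_one, Matrix.mul_one] at this
  simp only [this, map_sum, RCLike.re_ofReal_mul]

lemma re_trace_unitaryDiag_mul_sq_left (U V : unitaryGroup n 𝕜) (r : n → ℝ) {X : Matrix n n 𝕜}
    (hX : X.IsHermitian) :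
    RCLike.re (unitaryDiag U r * (X * X)).trace =
      ∑ i, ∑ j, r i * ‖matrixBetween U V X i j‖ ^ 2 := by
  have := trace_unitaryDiag_mul_mul_conjTranspose U V r X X
  rw [hX.eq] at this
  simp only [this, map_sum, RCLike.re_ofReal_mul, RCLike.star_def, RCLike.mul_conj,
    ← RCLike.ofReal_pow, RCLike.ofReal_re]

lemma re_trace_unitaryDiag_mul_sq_right (U V : unitaryGroup n 𝕜) (s : n → ℝ) {X : Matrix n n 𝕜}
    (hX : X.IsHermitian) :
    RCLike.re (unitaryDiag V s * (X * X)).trace =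
      ∑ i, ∑ j, s j * ‖matrixBetween U V X i j‖ ^ 2 := by
  rw [re_trace_unitaryDiag_mul_sq_left V U s hX, Finset.sum_comm]
  refine Finset.sum_congr rfl fun i _ => Finset.sum_congr rfl fun j _ => ?_
  rw [← norm_star, ← conjTranspose_apply, conjTranspose_matrixBetween, hX.eq]

lemma sum_nussbaumSzkolaFst (U V : unitaryGroup n 𝕜) (r : n → ℝ) :
    ∑ ij, nussbaumSzkolaFst U V r ij = RCLike.re (unitaryDiag U r).trace := by
  have := re_trace_unitaryDiag_mul_sq_left U V r (isHermitian_one (n := n) (α := 𝕜))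
  simpa [nussbaumSzkolaFst, Fintype.sum_prod_type] using this.symm

lemma two_mul_re_mul_star_sub_le {r s l : ℝ} (hr : 0 ≤ r) (hs : 0 ≤ s) (hl : 0 < l) (c y : 𝕜) :
    2 * (r * RCLike.re (y * star c)) - (s * ‖y‖ ^ 2 + l * (r * ‖y‖ ^ 2)) ≤
      (r * ‖c‖ ^ 2) ^ 2 / (s * ‖c‖ ^ 2 + l * (r * ‖c‖ ^ 2)) := by
  have hre : r * RCLike.re (y * star c) ≤ r * ‖c‖ * ‖y‖ := by
    have := RCLike.re_le_norm (y * star c)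
    rw [norm_mul, norm_star] at this
    linarith [mul_le_mul_of_nonneg_left this hr]
  have hzero : s + l * r = 0 → r * ‖c‖ = 0 := fun h => by
    have hlr : l * r = 0 := by linarith [mul_nonneg hl.le hr]
    simp [(mul_eq_zero.1 hlr).resolve_left hl.ne']
  have hcancel : (r * ‖c‖ ^ 2) ^ 2 / (s * ‖c‖ ^ 2 + l * (r * ‖c‖ ^ 2)) =
      (r * ‖c‖) ^ 2 / (s + l * r) := by
    rcases eq_or_ne c 0 with rfl | hc
    · simp
    · have hc2 : ‖c‖ ^ 2 ≠ 0 := by simpa using hc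
      rw [← mul_div_mul_left _ (s + l * r) hc2]
      ring_nf
  rw [hcancel]
  have := two_mul_mul_sub_mul_sq_le_sq_div (by positivity) hzero ‖y‖
  linarith

lemma two_mul_re_trace_sub_le_quadDiv (U V : unitaryGroup n 𝕜) {r s : n → ℝ}
    (hr : ∀ i, 0 ≤ r i) (hs : ∀ i, 0 ≤ s i) {X : Matrix n n 𝕜} (hX : X.IsHermitian) {l : ℝ}
    (hl : 0 < l) :
    2 * RCLike.re (unitaryDiag U r * X).trace -
        (RCLike.re (unitaryDiag V s * (X * X)).trace +
          l * RCLike.re (unitaryDiag U r * (X * X)).trace) ≤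
      quadDiv l (nussbaumSzkolaFst U V r) (nussbaumSzkolaSnd U V s) := by
  rw [re_trace_unitaryDiag_mul U V, re_trace_unitaryDiag_mul_sq_left U V r hX,
    re_trace_unitaryDiag_mul_sq_right U V s hX, quadDiv, Fintype.sum_prod_type]
  simp only [Finset.mul_sum, ← Finset.sum_add_distrib, ← Finset.sum_sub_distrib]
  exact Finset.sum_le_sum fun i _ => Finset.sum_le_sum fun j _ =>
    two_mul_re_mul_star_sub_le (hr i) (hs j) hl _ _

lemma nussbaumSzkolaFst_eq_zero {U V : unitaryGroup n 𝕜} {r s : n → ℝ}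
    (h : ∀ v, unitaryDiag V s *ᵥ v = 0 → unitaryDiag U r *ᵥ v = 0) (ij : n × n)
    (hQ : nussbaumSzkolaSnd U V s ij = 0) : nussbaumSzkolaFst U V r ij = 0 := by
  obtain ⟨i, j⟩ := ij
  rcases mul_eq_zero.1 hQ with hs | hw
  · have hker : unitaryDiag V s *ᵥ (V : Matrix n n 𝕜).col j = 0 := by
      rw [unitaryDiag_mulVec_col, show s j = 0 from hs, RCLike.ofReal_zero, zero_smul]
    have hentry : matrixBetween U V (unitaryDiag U r) i j = 0 := by
      rw [matrixBetween, Matrix.mul_assoc]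
      exact congrFun ((congrArg _ (h _ hker)).trans (mulVec_zero _)) i
    rw [matrixBetween_unitaryDiag_left_apply, mul_eq_zero, RCLike.ofReal_eq_zero] at hentry
    rcases hentry with hr | hw <;> simp [nussbaumSzkolaFst, *]
  · simp [nussbaumSzkolaFst, hw]

lemma classicalRelEnt_nussbaumSzkola (U V : unitaryGroup n 𝕜) {r s : n → ℝ}
    (h : ∀ ij, nussbaumSzkolaSnd U V s ij = 0 → nussbaumSzkolaFst U V r ij = 0) :
    classicalRelEnt (nussbaumSzkolaFst U V r) (nussbaumSzkolaSnd U V s) =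
      RCLike.re (unitaryDiag U r * (unitaryDiag U (fun i => Real.log (r i)) -
        unitaryDiag V fun j => Real.log (s j))).trace := by
  rw [re_trace_unitaryDiag_mul U V, classicalRelEnt, Fintype.sum_prod_type]
  refine Finset.sum_congr rfl fun i _ => Finset.sum_congr rfl fun j _ => ?_
  rw [matrixBetween_sub, Matrix.sub_apply, matrixBetween_unitaryDiag_left_apply,
    matrixBetween_unitaryDiag_right_apply, ← sub_mul, mul_assoc, RCLike.star_def, RCLike.mul_conj]
  norm_cast
  rcases eq_or_ne (nussbaumSzkolaFst U V r (i, j)) 0 with hP | hP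
  · rcases mul_eq_zero.1 hP with hr | hw
    · simp [hP, show r i = 0 from hr]
    · simp [hP, show ‖matrixBetween U V 1 i j‖ ^ 2 = 0 from hw]
  · have hQ := mt (h (i, j)) hP
    simp only [nussbaumSzkolaFst, nussbaumSzkolaSnd] at hP hQ ⊢
    rw [Real.log_mul (left_ne_zero_of_mul hP) (right_ne_zero_of_mul hP),
      Real.log_mul (left_ne_zero_of_mul hQ) (right_ne_zero_of_mul hQ)]
    ring

end Spectral

section Measurement

variable {𝕜 n κ : Type*} [RCLike 𝕜] [Fintype n] [DecidableEq n] [Fintype κ]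

/-- The probabilities `Tr A M_k` of the outcomes of the measurement `M` on `A` (Born's rule). -/
def outcomeProb (A : Matrix n n 𝕜) (M : κ → Matrix n n 𝕜) (k : κ) : ℝ :=
  RCLike.re (A * M k).trace

/-- The quantum side is a supremum over Hermitian `X`; the optimal classical test function
`x k = p k / (q k + l * p k)` provides the candidate `X = ∑ k, x k • M k`. -/
lemma quadDiv_outcomeProb_le (U V : unitaryGroup n 𝕜) {r s : n → ℝ}
    (hr : ∀ i, 0 ≤ r i) (hs : ∀ i, 0 ≤ s i) {M : κ → Matrix n n 𝕜}
    (hM : ∀ k, (M k).PosSemidef) (hsum : ∑ k, M k = 1) {l : ℝ} (hl : 0 < l) :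
    quadDiv l (outcomeProb (unitaryDiag U r) M) (outcomeProb (unitaryDiag V s) M) ≤
      quadDiv l (nussbaumSzkolaFst U V r) (nussbaumSzkolaSnd U V s) := by
  set ρ := unitaryDiag U r
  set σ := unitaryDiag V s
  set x : κ → ℝ := fun k => outcomeProb ρ M k / (outcomeProb σ M k + l * outcomeProb ρ M k)
  set X := ∑ k, x k • M k
  have hρ := re_trace_mul_sq_le (posSemidef_unitaryDiag U hr) hM hsum x
  have hσ := re_trace_mul_sq_le (posSemidef_unitaryDiag V hs) hM hsum x
  calc quadDiv l (outcomeProb ρ M) (outcomeProb σ M)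
      = 2 * ∑ k, x k * outcomeProb ρ M k -
        (∑ k, x k ^ 2 * outcomeProb σ M k + l * ∑ k, x k ^ 2 * outcomeProb ρ M k) := by
        simp only [quadDiv, Finset.mul_sum, ← Finset.sum_add_distrib, ← Finset.sum_sub_distrib]
        refine Finset.sum_congr rfl fun k _ => ?_
        rw [sq_div_eq_two_mul_mul_sub_mul_sq]
        ring
    _ ≤ 2 * RCLike.re (ρ * X).trace -
        (RCLike.re (σ * (X * X)).trace + l * RCLike.re (ρ * (X * X)).trace) := by
        rw [re_trace_mul_sum_smul]
        simp only [outcomeProb]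
        gcongr
    _ ≤ _ := two_mul_re_trace_sub_le_quadDiv U V hr hs
        (isHermitian_sum_smul (fun k => (hM k).1) x) hl

end Measurement

section SuppLE

variable {m : Type*} [Fintype m] {ρ σ : Matrix m m ℂ}

lemma SuppLE.mul_eq_zero {k : Type*} (h : SuppLE ρ σ) {X : Matrix m k ℂ}
    (hX : σ * X = 0) : ρ * X = 0 := by
  ext i j
  exact congrFun (h (X.col j) (funext fun a => congrFun (congrFun hX a) j)) i

lemma SuppLE.re_trace_mul_eq_zero {M : Matrix m m ℂ} (h : SuppLE ρ σ)
    (hσ : σ.PosSemidef) (hM : M.PosSemidef) (hq : (σ * M).trace.re = 0) :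
    (ρ * M).trace.re = 0 := by
  rw [h.mul_eq_zero (mul_eq_zero_of_re_trace_mul_eq_zero hσ hM hq), trace_zero, Complex.zero_re]

end SuppLE

section RelEnt

variable {ρ σ : Matrix ι ι ℂ}

lemma exists_unitaryDiag (hρ : ρ.PosSemidef) :
    ∃ (U : unitaryGroup ι ℂ) (r : ι → ℝ), (∀ i, 0 ≤ r i) ∧ ρ = unitaryDiag U r ∧
      mlog ρ = unitaryDiag U fun i => Real.log (r i) :=
  ⟨hρ.1.eigenvectorUnitary, hρ.1.eigenvalues, hρ.eigenvalues_nonneg, hρ.1.spectral_theorem,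
    dif_pos hρ.1⟩

theorem classicalRelEnt_outcomeProb_le {κ : Type*} [Fintype κ] (hρ : ρ.PosSemidef)
    (hσ : σ.PosSemidef) (hsupp : SuppLE ρ σ) {M : κ → Matrix ι ι ℂ}
    (hM : ∀ k, (M k).PosSemidef) (hsum : ∑ k, M k = 1) :
    classicalRelEnt (outcomeProb ρ M) (outcomeProb σ M) ≤
      (ρ * (mlog ρ - mlog σ)).trace.re := by
  have hp k : 0 ≤ outcomeProb ρ M k := re_trace_mul_nonneg hρ (hM k)
  have hq k : 0 ≤ outcomeProb σ M k := re_trace_mul_nonneg hσ (hM k)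
  have hpq k : outcomeProb σ M k = 0 → outcomeProb ρ M k = 0 :=
    hsupp.re_trace_mul_eq_zero hσ (hM k)
  have htotal : ∑ k, outcomeProb ρ M k = ρ.trace.re := by
    simpa [hsum, outcomeProb] using (re_trace_mul_sum_smul ρ M 1).symm
  obtain ⟨U, r, hr, rfl, hlogρ⟩ := exists_unitaryDiag hρ
  obtain ⟨V, s, hs, rfl, hlogσ⟩ := exists_unitaryDiag hσ
  have hPQ := nussbaumSzkolaFst_eq_zero hsupp
  rw [hlogρ, hlogσ]
  refine (classicalRelEnt_le_of_quadDiv_le hp hq hpq ?_ ?_ hPQ ?_ ?_).trans_eq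
    (classicalRelEnt_nussbaumSzkola U V hPQ)
  · exact fun ij => mul_nonneg (hr _) (sq_nonneg _)
  · exact fun ij => mul_nonneg (hs _) (sq_nonneg _)
  · exact htotal.trans (sum_nussbaumSzkolaFst U V r).symm
  · exact fun l hl => quadDiv_outcomeProb_le U V hr hs hM hsum hl

lemma binEnt_eq_binEntropy (ε : ℝ) : binEnt ε = Real.binEntropy ε := by
  rw [binEnt, Real.binEntropy_eq_negMulLog_add_negMulLog_one_sub, Real.negMulLog, Real.negMulLog]
  ring

lemma binEnt_le_one (ε : ℝ) : binEnt ε ≤ 1 := by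
  rw [binEnt_eq_binEntropy]
  linarith [Real.binEntropy_le_log_two (p := ε), Real.log_two_lt_d9]

lemma neg_mul_log_le_of_test (hρ : IsDensity ρ) (hσ : σ.PosSemidef) (hσ1 : σ.trace ≤ 1)
    (hsupp : SuppLE ρ σ) {M : Matrix ι ι ℂ} (hM : M.PosSemidef) (hM1 : (1 - M).PosSemidef) {ε : ℝ}
    (hp : (ρ * M).trace.re = 1 - ε) :
    -((1 - ε) * Real.log (σ * M).trace.re) ≤
      (ρ * (mlog ρ - mlog σ)).trace.re + binEnt ε := by
  have hdata := classicalRelEnt_outcomeProb_le hρ.1 hσ hsupp (M := ![M, 1 - M])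
    (by simp [Fin.forall_fin_two, hM, hM1]) (by simp)
  have hp' : (ρ * (1 - M)).trace.re = ε := by
    rw [Matrix.mul_sub, trace_sub, Matrix.mul_one, hρ.2, Complex.sub_re, hp]
    simp
  have hq' : (σ * (1 - M)).trace.re ≤ 1 := by
    rw [Matrix.mul_sub, trace_sub, Matrix.mul_one, Complex.sub_re]
    have hq0 : 0 ≤ (σ * M).trace.re := re_trace_mul_nonneg hσ hM
    have hσre : σ.trace.re ≤ 1 := (Complex.le_def.1 hσ1).1
    linarith
  have hε : 0 ≤ ε := hp' ▸ re_trace_mul_nonneg hρ.1 hM1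
  have hlog := mul_nonpos_of_nonneg_of_nonpos hε
    (Real.log_nonpos (re_trace_mul_nonneg hσ hM1) hq')
  simp only [classicalRelEnt, outcomeProb, Fin.sum_univ_two, cons_val_zero, cons_val_one,
    RCLike.re_eq_complex_re, hp, hp'] at hdata hlog
  rw [binEnt]
  linarith

lemma exp_neg_le_re_trace_mul_of_test (hρ : IsDensity ρ) (hσ : σ.PosSemidef) (hσ1 : σ.trace ≤ 1)
    (hsupp : SuppLE ρ σ) {M : Matrix ι ι ℂ} (hM : M.PosSemidef) (hM1 : (1 - M).PosSemidef) {ε : ℝ}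
    (hε1 : ε < 1) (hp : 1 - ε ≤ (ρ * M).trace.re) :
    Real.exp (-(((ρ * (mlog ρ - mlog σ)).trace.re + binEnt ε) * (1 - ε)⁻¹)) ≤
      (σ * M).trace.re := by
  have hε : 0 < 1 - ε := sub_pos.2 hε1
  have hp0 : 0 < (ρ * M).trace.re := hε.trans_le hp
  have hq0 : 0 < (σ * M).trace.re := (re_trace_mul_nonneg hσ hM).lt_of_ne' fun hq =>
    hp0.ne' (hsupp.re_trace_mul_eq_zero hσ hM hq)
  -- The binary entropy is not monotone, so `M` is first rescaled to have `Tr Mρ` exactly `1 - ε`.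
  set c : ℝ := (1 - ε) / (ρ * M).trace.re
  have hc0 : 0 < c := div_pos hε hp0
  have hc1 : c ≤ 1 := (div_le_one hp0).2 hp
  have hcM1 : (1 - c • M).PosSemidef := by
    convert hM1.add (hM.smul (sub_nonneg.2 hc1)) using 1
    module
  have hcp : (ρ * c • M).trace.re = 1 - ε :=
    (re_trace_mul_smul ρ M c).trans (div_mul_cancel₀ _ hp0.ne')
  have hcq : (σ * c • M).trace.re = c * (σ * M).trace.re := re_trace_mul_smul σ M c
  have htest := neg_mul_log_le_of_test hρ hσ hσ1 hsupp (hM.smul hc0.le) hcM1 hcp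
  rw [hcq] at htest
  calc _ ≤ c * (σ * M).trace.re := by
        rw [← Real.le_log_iff_exp_le (mul_pos hc0 hq0), neg_le, ← div_eq_mul_inv, le_div_iff₀ hε]
        linarith
    _ ≤ (σ * M).trace.re := mul_le_of_le_one_left hq0.le hc1

lemma DH_le_of_suppLE (hρ : IsDensity ρ) (hσ : σ.PosSemidef) (hσ1 : σ.trace ≤ 1)
    (hsupp : SuppLE ρ σ) {ε : ℝ} (hε0 : 0 ≤ ε) (hε1 : ε < 1) :
    DH ε ρ σ ≤ ((ρ * (mlog ρ - mlog σ)).trace.re + binEnt ε) * (1 - ε)⁻¹ := by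
  have hexp := le_csInf (s := {t : ℝ | ∃ M : Matrix ι ι ℂ, M.PosSemidef ∧ (1 - M).PosSemidef ∧
      1 - ε ≤ (ρ * M).trace.re ∧ t = (σ * M).trace.re})
    ⟨_, 1, .one, by simpa using PosSemidef.zero, by simpa [hρ.2] using hε0, rfl⟩
    (by rintro _ ⟨M, hM, hM1, hp, rfl⟩
        exact exp_neg_le_re_trace_mul_of_test hρ hσ hσ1 hsupp hM hM1 hε1 hp)
  rw [DH, neg_le]
  exact (Real.le_log_iff_exp_le ((Real.exp_pos _).trans_le hexp)).2 hexp

lemma DH_le_relEnt_add_binEnt (hρ : IsDensity ρ) (hσ : σ.PosSemidef) (hσ1 : σ.trace ≤ 1)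
    {ε : ℝ} (hε0 : 0 ≤ ε) (hε1 : ε < 1) :
    (DH ε ρ σ : EReal) ≤ (relEnt ρ σ + (binEnt ε : EReal)) * ((1 - ε)⁻¹ : ℝ) := by
  rw [relEnt]
  split_ifs with hsupp
  · exact_mod_cast DH_le_of_suppLE hρ hσ hσ1 hsupp hε0 hε1
  · rw [EReal.top_add_coe, EReal.top_mul_coe_of_pos (inv_pos.2 (sub_pos.2 hε1))]
    exact le_top

end RelEnt

theorem DH_le_relEnt_weak_converse_general (ρ σ : Matrix ι ι ℂ)
    (hρ : IsDensity ρ) (hσ : σ.PosSemidef) (hσ1 : σ.trace ≤ 1) (ε : ℝ) (hε0 : 0 ≤ ε)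
    (hε1 : ε < 1) :
    ((DH ε ρ σ : ℝ) : EReal) ≤ (relEnt ρ σ + ((binEnt ε : ℝ) : EReal)) * (((1 - ε)⁻¹ : ℝ) : EReal) ∧
    ((DH ε ρ σ : ℝ) : EReal) ≤ (relEnt ρ σ + (1 : EReal)) * (((1 - ε)⁻¹ : ℝ) : EReal) := by
  have hbound := DH_le_relEnt_add_binEnt hρ hσ hσ1 hε0 hε1
  have hε : (0 : EReal) ≤ ((1 - ε)⁻¹ : ℝ) := EReal.coe_nonneg.2 (inv_nonneg.2 (sub_nonneg.2 hε1.le))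
  have hbin : (binEnt ε : EReal) ≤ 1 := EReal.coe_le_coe_iff.2 (binEnt_le_one ε)
  exact ⟨hbound, hbound.trans (mul_le_mul_of_nonneg_right (add_le_add_right hbin _) hε)⟩

/-- **weak converse bound.** For states `ρ, σ` and `ε ∈ [0,1)`,
`D_H^ε(ρ‖σ) ≤ (D(ρ‖σ) + h(ε))/(1-ε)`; in particular it is at most `(D(ρ‖σ) + 1)/(1-ε)`. -/
theorem DH_le_relEnt_weak_converse (ρ σ : Matrix ι ι ℂ)
    (hρ : IsDensity ρ) (hσ : IsDensity σ) (ε : ℝ) (hε0 : 0 ≤ ε) (hε1 : ε < 1) :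
    ((DH ε ρ σ : ℝ) : EReal) ≤ (relEnt ρ σ + ((binEnt ε : ℝ) : EReal)) * (((1 - ε)⁻¹ : ℝ) : EReal) ∧
    ((DH ε ρ σ : ℝ) : EReal) ≤ (relEnt ρ σ + (1 : EReal)) * (((1 - ε)⁻¹ : ℝ) : EReal) :=
  DH_le_relEnt_weak_converse_general ρ σ hρ hσ.1 hσ.2.le ε hε0 hε1
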